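/- For every positive integer n, the sum of all entries of the Ramanujan matrix equals n: ∑_{d₁|n} ∑_{d₂|n} c_{d₁}(n/d₂) = n. -/

import Mathlib

/-- The Ramanujan sum `c_d(r)`: the sum of the `r`-th powers of all primitive
`d`-th roots of unity. -/
noncomputable def ramanujanSum (d r : ℕ) : ℂ :=
  ∑ m ∈ (Finset.range d).filter (fun m => Nat.gcd m d = 1),
    Complex.exp (2 * Real.pi * Complex.I * ((m : ℂ) * (r : ℂ) / (d : ℂ)))

/-!
Every `n`-th root of unity is primitive of exactly one order `d ∣ n`, so `∑_{d ∣ n} c_d(r)` is the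
sum of the `r`-th powers of all `n`-th roots of unity, which is `n` if `n ∣ r` and `0` otherwise.
In the Ramanujan matrix only the column `r = n` therefore has a nonzero sum.
-/

open Finset Polynomial

section RootsOfUnity

variable {R : Type*} [CommRing R] [IsDomain R] {n : ℕ} {ζ : R}

theorem sum_primitiveRoots_eq_sum_coprime {M : Type*} [AddCommMonoid M]
    (hζ : IsPrimitiveRoot ζ n) (f : R → M) :
    ∑ ξ ∈ primitiveRoots n R, f ξ = ∑ m ∈ range n with m.gcd n = 1, f (ζ ^ m) := by
  obtain rfl | hn := n.eq_zero_or_pos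
  · simp
  have : NeZero n := ⟨hn.ne'⟩
  refine (sum_nbij (ζ ^ ·) ?mapsTo ?injOn ?surjOn fun _ _ ↦ rfl).symm
  case mapsTo =>
    intro m hm
    exact (mem_primitiveRoots hn).2 (hζ.pow_of_coprime m (mem_filter.1 hm).2)
  case injOn =>
    intro i hi j hj hij
    exact hζ.pow_inj (mem_range.1 (mem_filter.1 hi).1) (mem_range.1 (mem_filter.1 hj).1) hij
  case surjOn =>
    intro ξ hξ
    obtain ⟨m, hmn, hm, rfl⟩ := hζ.isPrimitiveRoot_iff.1 ((mem_primitiveRoots hn).1 hξ)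
    exact ⟨m, mem_filter.2 ⟨mem_range.2 hmn, hm⟩, rfl⟩

variable (R n) in
theorem sum_divisors_sum_primitiveRoots {M : Type*} [AddCommMonoid M] (f : R → M) :
    ∑ d ∈ n.divisors, ∑ ξ ∈ primitiveRoots d R, f ξ = ∑ ξ ∈ nthRootsFinset n (1 : R), f ξ := by
  classical
  rw [IsPrimitiveRoot.nthRoots_one_eq_biUnion_primitiveRoots,
    sum_biUnion fun _ _ _ _ hne ↦ IsPrimitiveRoot.disjoint hne]

theorem sum_nthRootsFinset_mul_left {M : Type*} [AddCommMonoid M]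
    (hζ : ζ ∈ nthRootsFinset n (1 : R)) (f : R → M) :
    ∑ ξ ∈ nthRootsFinset n (1 : R), f (ζ * ξ) = ∑ ξ ∈ nthRootsFinset n (1 : R), f ξ := by
  have mapsTo : Set.MapsTo (ζ * ·) (nthRootsFinset n (1 : R)) (nthRootsFinset n (1 : R)) :=
    fun ξ hξ ↦ by simpa only [one_mul, mem_coe] using mul_mem_nthRootsFinset hζ hξ
  have injOn : Set.InjOn (ζ * ·) (nthRootsFinset n (1 : R)) :=
    (mul_right_injective₀ (ne_zero_of_mem_nthRootsFinset one_ne_zero hζ)).injOn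
  exact sum_nbij (ζ * ·) mapsTo injOn
    (surjOn_of_injOn_of_card_le _ mapsTo injOn le_rfl) fun _ _ ↦ rfl

theorem sum_nthRootsFinset_pow (hζ : IsPrimitiveRoot ζ n) (r : ℕ) :
    ∑ ξ ∈ nthRootsFinset n (1 : R), ξ ^ r = if n ∣ r then (n : R) else 0 := by
  obtain rfl | hn := n.eq_zero_or_pos
  · simp
  split_ifs with hr
  · have pow_eq_one : ∀ ξ ∈ nthRootsFinset n (1 : R), ξ ^ r = 1 := fun ξ hξ ↦ by
      obtain ⟨k, rfl⟩ := hr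
      rw [pow_mul, (mem_nthRootsFinset hn 1).1 hξ, one_pow]
    rw [sum_congr rfl pow_eq_one, sum_const, hζ.card_nthRootsFinset, nsmul_one]
  · have invariant : ζ ^ r * ∑ ξ ∈ nthRootsFinset n (1 : R), ξ ^ r =
        ∑ ξ ∈ nthRootsFinset n (1 : R), ξ ^ r := by
      simpa only [mul_pow, mul_sum] using
        sum_nthRootsFinset_mul_left (hζ.mem_nthRootsFinset hn) (· ^ r)
    by_contra sum_ne_zero
    exact hr ((hζ.pow_eq_one_iff_dvd r).1 ((mul_eq_right₀ sum_ne_zero).1 invariant))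

end RootsOfUnity

theorem ramanujanSum_eq_sum_primitiveRoots (d r : ℕ) :
    ramanujanSum d r = ∑ ξ ∈ primitiveRoots d ℂ, ξ ^ r := by
  obtain rfl | hd := eq_or_ne d 0
  · simp [ramanujanSum]
  rw [sum_primitiveRoots_eq_sum_coprime (Complex.isPrimitiveRoot_exp d hd) (· ^ r), ramanujanSum]
  refine sum_congr rfl fun m _ ↦ ?_
  rw [← pow_mul, ← Complex.exp_nat_mul]
  congr 1
  push_cast
  ring

theorem sum_divisors_ramanujanSum (n r : ℕ) :
    ∑ d ∈ n.divisors, ramanujanSum d r = if n ∣ r then (n : ℂ) else 0 := by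
  obtain rfl | hn := eq_or_ne n 0
  · simp
  simp only [ramanujanSum_eq_sum_primitiveRoots]
  rw [sum_divisors_sum_primitiveRoots,
    sum_nthRootsFinset_pow (Complex.isPrimitiveRoot_exp n hn)]

theorem stmt_12 (n : ℕ) (hn : 0 < n) :
    ∑ d₁ ∈ n.divisors, ∑ d₂ ∈ n.divisors, ramanujanSum d₁ (n / d₂) = (n : ℂ) := by
  have dvd_iff_eq : ∀ r ∈ n.divisors, n ∣ r ↔ n = r := fun r hr ↦
    ⟨fun h ↦ h.antisymm (Nat.dvd_of_mem_divisors hr), fun h ↦ h.dvd⟩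
  calc ∑ d₁ ∈ n.divisors, ∑ d₂ ∈ n.divisors, ramanujanSum d₁ (n / d₂)
      = ∑ d₂ ∈ n.divisors, ∑ d₁ ∈ n.divisors, ramanujanSum d₁ (n / d₂) := sum_comm
    _ = ∑ r ∈ n.divisors, ∑ d ∈ n.divisors, ramanujanSum d r :=
      Nat.sum_div_divisors n fun r ↦ ∑ d ∈ n.divisors, ramanujanSum d r
    _ = ∑ r ∈ n.divisors, if n = r then (n : ℂ) else 0 :=
      sum_congr rfl fun r hr ↦ by
        simp only [sum_divisors_ramanujanSum, dvd_iff_eq r hr]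
    _ = n := by rw [sum_ite_eq, if_pos (Nat.mem_divisors_self n hn.ne')]
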